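/- For every integer n ≥ 5, there exist a line ℓ and an ℓ-critical set C = A ∪ B of points in the plane in general position with |A| = 4 and |B| = n such that there is no ℓ-divided 5-hole in C. -/

import Mathlib

noncomputable section

/-- Points of the plane. -/
abbrev Pt : Type := ℝ × ℝ

/-- The cross product (signed area) of two planar vectors. -/
def cross2 (u v : Pt) : ℝ := u.1 * v.2 - u.2 * v.1

/-- The dot product of two planar vectors. -/
def dotp (v p : Pt) : ℝ := v.1 * p.1 + v.2 * p.2

/-- A set of points in the plane is in general position if no three of its points
are collinear. -/
def GenPos (P : Set Pt) : Prop :=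
  ∀ p ∈ P, ∀ q ∈ P, ∀ r ∈ P, p ≠ q → p ≠ r → q ≠ r →
    ¬ Collinear ℝ ({p, q, r} : Set Pt)

/-- A set of points is in convex position if no point of the set lies in the convex
hull of the other points. -/
def ConvexPos (S : Set Pt) : Prop :=
  ∀ p ∈ S, p ∉ convexHull ℝ (S \ {p})

/-- `H` is a `k`-hole in `P`: a subset of `P` of size `k` in convex position whose
convex hull contains no point of `P \ H`. -/
def IsKHole (k : ℕ) (P H : Finset Pt) : Prop :=
  H ⊆ P ∧ H.card = k ∧ ConvexPos (↑H : Set Pt) ∧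
    ∀ p ∈ P, p ∉ H → p ∉ convexHull ℝ (↑H : Set Pt)

/-- The number of `k`-holes in `P`. -/
def numKHoles (k : ℕ) (P : Finset Pt) : ℕ :=
  Set.ncard {H : Finset Pt | IsKHole k P H}

/-- For an `ℓ`-divided set `P = A ∪ B`, an `ℓ`-divided 5-hole is a 5-hole in `A ∪ B`
containing points of both `A` and `B`. -/
def DividedFiveHole (A B H : Finset Pt) : Prop :=
  IsKHole 5 (A ∪ B) H ∧ (↑H ∩ ↑A : Set Pt).Nonempty ∧ (↑H ∩ ↑B : Set Pt).Nonempty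

/-- `x` is an extremal point of `P`: it lies on the boundary of the convex hull of `P`. -/
def OnHullBoundary (P : Finset Pt) (x : Pt) : Prop :=
  x ∈ frontier (convexHull ℝ (↑P : Set Pt))

/-- An `ℓ`-divided set `C = A ∪ B` is `ℓ`-critical if neither part is in convex position
and, for every extremal point `x` of `C`, one of the sets `(C \ {x}) ∩ A` and
`(C \ {x}) ∩ B` is in convex position. -/
def LCritical (A B : Finset Pt) : Prop :=
  ¬ ConvexPos (↑A : Set Pt) ∧ ¬ ConvexPos (↑B : Set Pt) ∧
    ∀ x ∈ A ∪ B, OnHullBoundary (A ∪ B) x →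
      (ConvexPos (↑(A.erase x) : Set Pt) ∨ ConvexPos (↑(B.erase x) : Set Pt))

/-- The closed wedge with apex `a` swept clockwise from the ray `a→p` to the ray `a→q`.
If the clockwise angle from `a→p` to `a→q` is at most `π` the wedge is convex, otherwise
it is the corresponding reflex region. -/
def Wedge (a p q : Pt) : Set Pt :=
  if cross2 (p - a) (q - a) ≤ 0 then
    {x | cross2 (p - a) (x - a) ≤ 0 ∧ 0 ≤ cross2 (q - a) (x - a)}
  else
    {x | cross2 (p - a) (x - a) ≤ 0 ∨ 0 ≤ cross2 (q - a) (x - a)}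

/-- `W` is an `a`-wedge of `A`: one of the closed regions into which the rays from `a`
through the other points of `A` partition the plane, i.e. a wedge spanned by two
points of `A \ {a}` that are angularly consecutive around `a` (no other point of `A`
lies in the wedge). -/
def IsAWedge (A : Finset Pt) (a : Pt) (W : Set Pt) : Prop :=
  ∃ p ∈ A.erase a, ∃ q ∈ A.erase a, p ≠ q ∧ W = Wedge a p q ∧
    (↑A : Set Pt) ∩ Wedge a p q ⊆ {a, p, q}

/-- The combinatorial data of the `a*`-wedges of an `ℓ`-divided set `P = A ∪ B`, where
`ℓ` is the vertical line `x = x0` and `A` lies to its left: `aStar` is the rightmost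
interior point `a*` of `A`; `lbl` is the clockwise cyclic labeling `a_0, a_1, …` of
`A \ {a*}` (period `|A| - 1`), so that the `k`-th wedge `W_k` is swept clockwise from
the ray through `lbl (k-1)` to the ray through `lbl k` and contains no other point
of `A`; the wedges `W_1, …, W_t` are exactly those meeting `ℓ`, in top-to-bottom
order along `ℓ`. -/
structure StarSetup (x0 : ℝ) (A : Finset Pt) where
  aStar : Pt
  lbl : ℕ → Pt
  t : ℕ
  aStar_mem : aStar ∈ A
  aStar_interior : aStar ∈ interior (convexHull ℝ (↑A : Set Pt))
  aStar_rightmost : ∀ p ∈ A, p ∈ interior (convexHull ℝ (↑A : Set Pt)) → p.1 ≤ aStar.1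
  lbl_mem : ∀ k, lbl k ∈ A.erase aStar
  lbl_periodic : ∀ k, lbl (k + (A.card - 1)) = lbl k
  lbl_bij : ∀ p ∈ A.erase aStar, ∃! k, k ∈ Finset.Icc 1 (A.card - 1) ∧ lbl k = p
  consec : ∀ k ∈ Finset.Icc 1 (A.card - 1),
    (↑A : Set Pt) ∩ Wedge aStar (lbl (k - 1)) (lbl k) ⊆ {aStar, lbl (k - 1), lbl k}
  t_pos : 1 ≤ t
  t_le : t ≤ A.card - 1
  inter_iff : ∀ k ∈ Finset.Icc 1 (A.card - 1),
    ((Wedge aStar (lbl (k - 1)) (lbl k)) ∩ {p : Pt | p.1 = x0}).Nonempty ↔ k ≤ t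
  ordered : ∀ k ∈ Finset.Icc 1 t, ∀ k' ∈ Finset.Icc 1 t, k < k' →
    ∀ p ∈ (Wedge aStar (lbl (k - 1)) (lbl k)) ∩ {q : Pt | q.1 = x0},
    ∀ p' ∈ (Wedge aStar (lbl (k' - 1)) (lbl k')) ∩ {q : Pt | q.1 = x0},
      p'.2 ≤ p.2

/-- The `k`-th `a*`-wedge `W_k`. -/
def StarSetup.W {x0 : ℝ} {A : Finset Pt} (S : StarSetup x0 A) (k : ℕ) : Set Pt :=
  Wedge S.aStar (S.lbl (k - 1)) (S.lbl k)

/-- `w_k`, the number of points of `B` in the `k`-th `a*`-wedge. -/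
def StarSetup.w {x0 : ℝ} {A : Finset Pt} (S : StarSetup x0 A) (B : Finset Pt) (k : ℕ) : ℕ :=
  Set.ncard ((↑B : Set Pt) ∩ S.W k)

/-! `B` is a carrot: a zigzag whose abscissas grow geometrically, with rows bent slightly towards
the horizontal axis, and a remote tip. `A` consists of two viewers above the axis and two below. The
zigzag is in convex position and lies inside the triangle of the outer viewers and the tip, so that
only the tip and the viewers are extremal, whence criticality.

The order in which a viewer `a` sees two points of `B` decides which points of `B` lie in the
triangle that they span with `a`, and a hole has no point of `C` inside a triangle of its vertices.
An outer viewer sees the zigzag from left to right, so between two zigzag points of a hole through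
it there is only room for one point of the opposite row. An inner viewer sees some consecutive
points in reversed order and needs the middle one of three zigzag points to be in its own row. Hence
a hole through a viewer has at most three points in the carrot, and at most two if it contains both
viewers of one side. A hole through viewers of both sides is blocked by the first zigzag point and
by the inner lower viewer, which lies in the triangle of the inner upper viewer, the outer lower
viewer and any point of `C` to its right. In all cases at most four vertices are possible. -/

/-- Twice the signed area of the triangle `p q r`, positive if `p`, `q`, `r` are in
counterclockwise order. -/
def orient (p q r : Pt) : ℝ := cross2 (q - p) (r - p)

/-- The points `p`, `q`, `r` make a counterclockwise turn if `c` is even and a clockwise turn if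
`c` is odd. Keeping the sense of rotation as a parity lets mirror-image arguments share a proof. -/
def Turns (c : ℕ) (p q r : Pt) : Prop := 0 < (-1 : ℝ) ^ c * orient p q r

/-- `x` lies in the open triangle with vertices `p`, `q`, `r`, listed in either orientation. -/
def InTriangle (x p q r : Pt) : Prop := ∃ c, Turns c p q x ∧ Turns c q r x ∧ Turns c r p x

lemma orient_rotate (p q r : Pt) : orient q r p = orient p q r := by
  simp only [orient, cross2, Prod.fst_sub, Prod.snd_sub]
  ring

lemma orient_swap (p q r : Pt) : orient q p r = -orient p q r := by
  simp only [orient, cross2, Prod.fst_sub, Prod.snd_sub]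
  ring

lemma orient_add_orient_add_orient (x p q r : Pt) :
    orient q r x + orient r p x + orient p q x = orient p q r := by
  simp only [orient, cross2, Prod.fst_sub, Prod.snd_sub]
  ring

lemma orient_smul_add_smul_add_smul (x p q r : Pt) :
    orient q r x • p + orient r p x • q + orient p q x • r = orient p q r • x := by
  simp only [orient, cross2]
  ext <;>
  · simp only [Prod.fst_add, Prod.snd_add, Prod.fst_sub, Prod.snd_sub, Prod.smul_fst,
      Prod.smul_snd, smul_eq_mul]
    ring

lemma not_collinear_of_orient_ne_zero {p q r : Pt} (h : orient p q r ≠ 0) :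
    ¬ Collinear ℝ {p, q, r} := by
  intro hcol
  obtain ⟨v, hv⟩ := (collinear_iff_of_mem (p₀ := p) (by simp)).1 hcol
  obtain ⟨s, rfl⟩ := hv q (by simp)
  obtain ⟨t, rfl⟩ := hv r (by simp)
  refine h ?_
  simp only [orient, cross2, vadd_eq_add, add_sub_cancel_right, Prod.smul_fst, Prod.smul_snd,
    smul_eq_mul]
  ring

namespace Turns

variable {c d : ℕ} {p q r x : Pt}

lemma congr (h : Turns c p q r) (hcd : c % 2 = d % 2) : Turns d p q r := by
  rwa [Turns, neg_one_pow_eq_pow_mod_two, ← hcd, ← neg_one_pow_eq_pow_mod_two]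

lemma rotate (h : Turns c p q r) : Turns c q r p := by
  rwa [Turns, orient_rotate]

lemma swap (h : Turns c p q r) : Turns (c + 1) q p r := by
  rwa [Turns, orient_swap, pow_succ, mul_neg_one, neg_mul_neg]

lemma not_collinear (h : Turns c p q r) : ¬ Collinear ℝ {p, q, r} :=
  not_collinear_of_orient_ne_zero (right_ne_zero_of_mul h.ne')

lemma ne_left (h : Turns c p q x) : x ≠ p := by
  rintro rfl
  simp [Turns, orient, cross2] at h

lemma isOpen_setOf (c : ℕ) (p q : Pt) : IsOpen {x | Turns c p q x} := by
  refine isOpen_lt continuous_const ?_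
  simp only [orient, cross2]
  fun_prop

end Turns

lemma inTriangle_of_turns {c : ℕ} {a p q x : Pt} (hpx : Turns c a p x) (hxq : Turns c a x q)
    (hpq : Turns c p q x) : InTriangle x a p q :=
  ⟨c, hpx, hpq, hxq.rotate.rotate⟩

namespace InTriangle

variable {p q r x : Pt} {S : Set Pt}

lemma rotate (h : InTriangle x p q r) : InTriangle x q r p :=
  let ⟨c, hpq, hqr, hrp⟩ := h
  ⟨c, hqr, hrp, hpq⟩

lemma ne_left (h : InTriangle x p q r) : x ≠ p :=
  let ⟨_, hpq, _, _⟩ := h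
  hpq.ne_left

-- The barycentric coordinates of `x` are the ratios of signed areas.
lemma mem_convexHull (h : InTriangle x p q r) : x ∈ convexHull ℝ {p, q, r} := by
  obtain ⟨c, hpq, hqr, hrp⟩ := h
  set s := (-1 : ℝ) ^ c
  let weight : Fin 3 → ℝ := ![s * orient q r x, s * orient r p x, s * orient p q x]
  have hsum : ∑ i, weight i = s * orient p q r := by
    simp only [weight, Fin.sum_univ_three, Matrix.cons_val, ← mul_add,
      orient_add_orient_add_orient]
  have hpos : 0 < ∑ i, weight i := by
    simpa only [weight, Fin.sum_univ_three, Matrix.cons_val] using add_pos (add_pos hqr hrp) hpq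
  have hx : Finset.univ.centerMass weight ![p, q, r] = x := by
    rw [Finset.centerMass, inv_smul_eq_iff₀ hpos.ne', hsum, mul_smul,
      ← orient_smul_add_smul_add_smul]
    simp only [weight, Fin.sum_univ_three, Matrix.cons_val, smul_add, mul_smul]
  rw [← hx]
  refine Finset.univ.centerMass_mem_convexHull (fun i _ ↦ ?_) hpos fun i _ ↦ ?_
  · fin_cases i
    exacts [hqr.le, hrp.le, hpq.le]
  · fin_cases i <;> simp

lemma mem_interior_convexHull (h : InTriangle x p q r) (hp : p ∈ S) (hq : q ∈ S) (hr : r ∈ S) :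
    x ∈ interior (convexHull ℝ S) := by
  obtain ⟨c, hpq, hqr, hrp⟩ := h
  have hopen := ((Turns.isOpen_setOf c p q).inter (Turns.isOpen_setOf c q r)).inter
    (Turns.isOpen_setOf c r p)
  refine interior_maximal ?_ hopen ⟨⟨hpq, hqr⟩, hrp⟩
  rintro y ⟨⟨hypq, hyqr⟩, hyrp⟩
  refine convexHull_mono ?_ (mem_convexHull ⟨c, hypq, hyqr, hyrp⟩)
  simp [Set.insert_subset_iff, hp, hq, hr]

lemma not_onHullBoundary {P : Finset Pt} (h : InTriangle x p q r) (hp : p ∈ P) (hq : q ∈ P)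
    (hr : r ∈ P) : ¬ OnHullBoundary P x :=
  fun hx ↦ hx.2 (h.mem_interior_convexHull hp hq hr)

lemma not_convexPos (h : InTriangle x p q r) (hx : x ∈ S) (hp : p ∈ S) (hq : q ∈ S)
    (hr : r ∈ S) : ¬ ConvexPos S := fun hS ↦
  hS x hx <| convexHull_mono (by
    simp [Set.insert_subset_iff, hp, hq, hr, h.ne_left.symm, h.rotate.ne_left.symm,
      h.rotate.rotate.ne_left.symm]) h.mem_convexHull

end InTriangle

lemma IsKHole.not_inTriangle {k : ℕ} {P H : Finset Pt} {p q r x : Pt} (hH : IsKHole k P H)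
    (hx : x ∈ P) (hp : p ∈ H) (hq : q ∈ H) (hr : r ∈ H) : ¬ InTriangle x p q r := by
  intro h
  obtain ⟨-, -, hconv, hempty⟩ := hH
  by_cases hxH : x ∈ H
  · exact h.not_convexPos (S := H) hxH hp hq hr hconv
  · exact hempty x hx hxH (interior_subset (h.mem_interior_convexHull hp hq hr))

lemma GenPos.mono {P Q : Set Pt} (hQ : GenPos Q) (h : P ⊆ Q) : GenPos P :=
  fun p hp q hq r hr ↦ hQ p (h hp) q (h hq) r (h hr)

lemma GenPos.union {P Q : Set Pt} (hP : GenPos P) (hQ : GenPos Q)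
    (hPPQ : ∀ p ∈ P, ∀ p' ∈ P, ∀ q ∈ Q, p ≠ p' → ¬ Collinear ℝ {p, p', q})
    (hPQQ : ∀ p ∈ P, ∀ q ∈ Q, ∀ q' ∈ Q, q ≠ q' → ¬ Collinear ℝ {p, q, q'}) :
    GenPos (P ∪ Q) := by
  rintro x (hx | hx) y (hy | hy) z (hz | hz) hxy hxz hyz
  · exact hP x hx y hy z hz hxy hxz hyz
  · exact hPPQ x hx y hy z hz hxy
  · rw [Set.pair_comm y]
    exact hPPQ x hx z hz y hy hxz
  · exact hPQQ x hx y hy z hz hyz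
  · rw [Set.insert_comm x, Set.pair_comm x]
    exact hPPQ y hy z hz x hx hyz
  · rw [Set.insert_comm x]
    exact hPQQ y hy x hx z hz hxz
  · rw [Set.pair_comm y, Set.insert_comm x]
    exact hPQQ z hz x hx y hy hxy
  · exact hQ x hx y hy z hz hxy hxz hyz

lemma GenPos.insert {p : Pt} {P : Set Pt} (hP : GenPos P)
    (h : ∀ q ∈ P, ∀ r ∈ P, q ≠ r → ¬ Collinear ℝ {p, q, r}) : GenPos (insert p P) := by
  have hp : GenPos {p} := by
    rintro _ rfl _ rfl _ _ hne
    exact absurd rfl hne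
  rw [Set.insert_eq]
  refine hp.union hP ?_ ?_
  · rintro _ rfl _ rfl _ _ hne
    exact absurd rfl hne
  · rintro _ rfl
    exact h

lemma genPos_image {ι : Type*} [LinearOrder ι] {f : ι → Pt} {s : Set ι}
    (h : ∀ i ∈ s, ∀ j ∈ s, ∀ k ∈ s, i < j → j < k → ¬ Collinear ℝ {f i, f j, f k}) :
    GenPos (f '' s) := by
  rintro _ ⟨i, hi, rfl⟩ _ ⟨j, hj, rfl⟩ _ ⟨k, hk, rfl⟩ hij hik hjk
  rcases lt_or_gt_of_ne (ne_of_apply_ne f hij) with hij | hji <;>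
  rcases lt_or_gt_of_ne (ne_of_apply_ne f hik) with hik | hki <;>
  rcases lt_or_gt_of_ne (ne_of_apply_ne f hjk) with hjk | hkj
  · exact h i hi j hj k hk hij hjk
  · rw [Set.pair_comm (f j)]
    exact h i hi k hk j hj hik hkj
  · exact absurd (hij.trans hjk) hki.asymm
  · rw [Set.pair_comm (f j), Set.insert_comm (f i)]
    exact h k hk i hi j hj hki hij
  · rw [Set.insert_comm (f i)]
    exact h j hj i hi k hk hji hik
  · exact absurd (hkj.trans hji) hik.asymm
  · rw [Set.insert_comm (f i), Set.pair_comm (f i)]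
    exact h j hj k hk i hi hjk hki
  · rw [Set.pair_comm (f j), Set.insert_comm (f i), Set.pair_comm (f i)]
    exact h k hk j hj i hi hkj hji

lemma GenPos.convexPos_of_card_eq_three {S : Finset Pt} (hS : GenPos (S : Set Pt))
    (hcard : S.card = 3) : ConvexPos (S : Set Pt) := by
  intro p hp hmem
  have hpair : (S.erase p).card = 2 := by rw [Finset.card_erase_of_mem hp, hcard]
  obtain ⟨q, r, hqr, hSp⟩ := Finset.card_eq_two.1 hpair
  have hq : q ∈ S.erase p := by simp [hSp]
  have hr : r ∈ S.erase p := by simp [hSp]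
  rw [← Finset.coe_erase, hSp, Finset.coe_pair, convexHull_pair, mem_segment_iff_wbtw] at hmem
  rw [Finset.mem_erase] at hq hr
  refine hS q hq.2 p hp r hr.2 hq.1 hqr hr.1.symm hmem.collinear

lemma ConvexPos.of_dotp_lt {S : Set Pt} (h : ∀ p ∈ S, ∃ v, ∀ q ∈ S, q ≠ p → dotp v q < dotp v p) :
    ConvexPos S := by
  intro p hp hmem
  obtain ⟨v, hv⟩ := h p hp
  have hlin : IsLinearMap ℝ (dotp v) :=
    ⟨fun x y ↦ by simp only [dotp, Prod.fst_add, Prod.snd_add]; ring,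
      fun t x ↦ by simp only [dotp, Prod.smul_fst, Prod.smul_snd, smul_eq_mul]; ring⟩
  have hlt : dotp v p < dotp v p :=
    convexHull_min (fun q hq ↦ hv q hq.1 hq.2) (convex_halfSpace_lt hlin (dotp v p)) hmem
  exact hlt.false

/-- The height of `p` above the horizontal axis if `c` is even, below it if `c` is odd. -/
def height (c : ℕ) (p : Pt) : ℝ := (-1) ^ c * p.2

lemma turns_iff {c : ℕ} {p q r : Pt} :
    Turns c p q r ↔
      (q.1 - p.1) * (height c p - height c r) < (r.1 - p.1) * (height c p - height c q) := by
  rw [← sub_pos, Turns]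
  simp only [orient, cross2, height, Prod.fst_sub, Prod.snd_sub]
  ring_nf

lemma height_succ (c : ℕ) (p : Pt) : height (c + 1) p = -height c p := by
  simp only [height, pow_succ]
  ring

/-- The abscissa of the tip of the carrot, large compared to those of the other points. -/
def tipX (m : ℕ) : ℝ := 100 * 3 ^ m

/-- The tip of the carrot. -/
def tip (m : ℕ) : Pt := (tipX m, 5 / 2)

/-- The distance of the `i`-th zigzag point from the line `y = 1` or `y = -1` it accompanies. It is
a quadratic function of the abscissa, so that each row of the zigzag lies on a parabola bending
towards the horizontal axis, and too small to affect the orientations that straight rows fix. -/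
def sag (m i : ℕ) : ℝ := (3 ^ i) ^ 2 / tipX m ^ 3

/-- The `i`-th point of the zigzag of the carrot, in the upper row if `i` is even and in the lower
row if `i` is odd. Growing abscissas let every viewer see far apart points in left-to-right
order. -/
def zigzag (m i : ℕ) : Pt := (3 ^ i, (-1) ^ i * (1 - sag m i))

/-- The part `B` of the construction: a zigzag of `m` points and the tip. -/
def carrot (m : ℕ) : Finset Pt := insert (tip m) ((Finset.range m).image (zigzag m))

section Coordinates

variable {c i j m : ℕ}

lemma tipX_pos : 0 < tipX m := by
  unfold tipX
  positivity

lemma three_hundred_mul_pow_le_tipX (hi : i < m) : 300 * 3 ^ i ≤ tipX m := by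
  have hpow : (3 : ℝ) ^ (i + 1) ≤ 3 ^ m := pow_le_pow_right₀ (by norm_num) hi
  rw [pow_succ] at hpow
  rw [tipX]
  linarith

lemma three_mul_pow_le_pow (hij : i < j) : 3 * (3 : ℝ) ^ i ≤ 3 ^ j := by
  rw [← pow_succ']
  exact pow_le_pow_right₀ (by norm_num) hij

lemma sag_pos : 0 < sag m i :=
  div_pos (by positivity) (pow_pos tipX_pos 3)

lemma tipX_mul_sag_le (hi : i < m) : tipX m * sag m i ≤ 1 / 100 := by
  have hpos := tipX_pos (m := m)
  have hX := three_hundred_mul_pow_le_tipX hi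
  rw [sag, mul_div_assoc', div_le_div_iff₀ (pow_pos hpos 3) (by norm_num)]
  nlinarith [mul_le_mul hX hX (by positivity) hpos.le]

lemma sag_le (hi : i < m) : sag m i ≤ 1 / 100 := by
  have hX := three_hundred_mul_pow_le_tipX hi
  have hX1 : (1 : ℝ) ≤ 3 ^ i := one_le_pow₀ (by norm_num)
  nlinarith [tipX_mul_sag_le hi, sag_pos (m := m) (i := i)]

lemma sag_succ (m i : ℕ) : sag m (i + 1) = 9 * sag m i := by
  simp only [sag, pow_succ]
  ring

lemma height_zigzag_of_mod_eq (h : i % 2 = c % 2) : height c (zigzag m i) = 1 - sag m i := by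
  rw [height, zigzag, neg_one_pow_eq_pow_mod_two (n := c), ← h, ← neg_one_pow_eq_pow_mod_two,
    ← mul_assoc, ← mul_pow]
  norm_num

lemma height_zigzag_of_mod_ne (h : i % 2 ≠ c % 2) : height c (zigzag m i) = -(1 - sag m i) := by
  rw [← height_zigzag_of_mod_eq (c := c + 1) (by omega), height_succ, neg_neg]

lemma height_zigzag_le (hi : i < m) : height c (zigzag m i) ≤ 1 - sag m i := by
  by_cases h : i % 2 = c % 2
  · exact (height_zigzag_of_mod_eq h).le
  · linarith [height_zigzag_of_mod_ne (m := m) h, sag_le hi]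

lemma height_zigzag_lt_one (hi : i < m) : height c (zigzag m i) < 1 := by
  linarith [height_zigzag_le (c := c) hi, sag_pos (m := m) (i := i)]

lemma neg_one_lt_height_zigzag (hi : i < m) : -1 < height c (zigzag m i) := by
  by_cases h : i % 2 = c % 2
  · linarith [height_zigzag_of_mod_eq (m := m) h, sag_le hi]
  · linarith [height_zigzag_of_mod_ne (m := m) h, sag_pos (m := m) (i := i)]

lemma abs_height_tip (c m : ℕ) : |height c (tip m)| = 5 / 2 := by
  rw [height, abs_mul, abs_neg_one_pow, one_mul]
  exact abs_of_pos (by norm_num [tip])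

end Coordinates

/-- The properties shared by the points of `A` on one side of the horizontal axis, the upper side
if `c` is even and the lower one if `c` is odd. -/
structure Viewer (c : ℕ) (a : Pt) : Prop where
  neg_half_le_fst : -1 / 2 ≤ a.1
  fst_le_half : a.1 ≤ 1 / 2
  le_height : 3 / 2 ≤ height c a
  height_le : height c a ≤ 3

/-- A viewer beyond all lines through two consecutive zigzag points, as seen from the axis: it
sees the whole zigzag in left-to-right order. -/
structure OuterViewer (c : ℕ) (a : Pt) : Prop extends Viewer c a where
  two_le_height : 2 ≤ height c a
  two_lt_height_add : 2 < height c a + a.1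

/-- A viewer on the near side of every line from a zigzag point of its own row to the next zigzag
point: it sees each such pair in right-to-left order. -/
structure InnerViewer (c : ℕ) (a : Pt) : Prop extends Viewer c a where
  height_le_two : height c a ≤ 2
  height_add_le : height c a + a.1 ≤ 3 / 2

section Visibility

variable {c i j k m : ℕ} {a : Pt}

-- The two rows are replaced by the lines `y = 1` and `y = -1`.
lemma Viewer.turns_of_mul_pow_le {r : ℝ} (ha : Viewer c a) (hi : i < m) (hj : j < m)
    (hr : r * 3 ^ i ≤ 3 ^ j)
    (hlt : (3 ^ i - a.1) * (height c a + 1) < (r * 3 ^ i - a.1) * (height c a - 1)) :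
    Turns c a (zigzag m i) (zigzag m j) := by
  obtain ⟨-, hs, hh, -⟩ := ha
  have hX : (1 : ℝ) ≤ 3 ^ i := one_le_pow₀ (by norm_num)
  have hY : (1 : ℝ) ≤ 3 ^ j := one_le_pow₀ (by norm_num)
  have hi1 := height_zigzag_lt_one (c := c) hi
  have hj1 := neg_one_lt_height_zigzag (c := c) hj
  rw [turns_iff]
  calc ((3 : ℝ) ^ i - a.1) * (height c a - height c (zigzag m j))
      ≤ (3 ^ i - a.1) * (height c a + 1) := by gcongr <;> linarith
    _ < (r * 3 ^ i - a.1) * (height c a - 1) := hlt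
    _ ≤ (3 ^ j - a.1) * (height c a - height c (zigzag m i)) := by gcongr <;> linarith

lemma Viewer.turns_of_add_two_le (ha : Viewer c a) (hij : i + 2 ≤ j) (hj : j < m) :
    Turns c a (zigzag m i) (zigzag m j) := by
  have hX : (1 : ℝ) ≤ 3 ^ i := one_le_pow₀ (by norm_num)
  have hY : (9 : ℝ) * 3 ^ i ≤ 3 ^ j := by
    calc (9 : ℝ) * 3 ^ i = 3 ^ (i + 2) := by ring
      _ ≤ 3 ^ j := pow_le_pow_right₀ (by norm_num) hij
  refine ha.turns_of_mul_pow_le (by omega) hj hY ?_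
  obtain ⟨hs, -, hh, -⟩ := ha
  nlinarith

lemma OuterViewer.turns_of_lt (ha : OuterViewer c a) (hij : i < j) (hj : j < m) :
    Turns c a (zigzag m i) (zigzag m j) := by
  have hX : (1 : ℝ) ≤ 3 ^ i := one_le_pow₀ (by norm_num)
  refine ha.turns_of_mul_pow_le (hij.trans hj) hj (three_mul_pow_le_pow hij) ?_
  obtain ⟨-, hh, hha⟩ := ha
  nlinarith

lemma Viewer.turns_of_mod_ne (ha : Viewer c a) (hi : i % 2 ≠ c % 2) (hij : i < j) (hj : j < m) :
    Turns c a (zigzag m i) (zigzag m j) := by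
  obtain ⟨hs, hs', hh, -⟩ := ha
  have hX : (1 : ℝ) ≤ 3 ^ i := one_le_pow₀ (by norm_num)
  have hY := three_mul_pow_le_pow hij
  have hsag : 3 ^ j * sag m i ≤ 1 / 100 := by
    have hYM := three_hundred_mul_pow_le_tipX hj
    nlinarith [tipX_mul_sag_le (hij.trans hj), sag_pos (m := m) (i := i)]
  have hsag' := sag_le (hij.trans hj)
  have hj1 := neg_one_lt_height_zigzag (c := c) hj
  rw [turns_iff, height_zigzag_of_mod_ne hi]
  calc ((3 : ℝ) ^ i - a.1) * (height c a - height c (zigzag m j))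
      ≤ (3 ^ i - a.1) * (height c a + 1) := by gcongr <;> linarith
    _ < (3 ^ j - a.1) * (height c a - -(1 - sag m i)) := by nlinarith

lemma InnerViewer.turns_succ (ha : InnerViewer c a) (hi : i % 2 = c % 2) (him : i + 1 < m) :
    Turns c a (zigzag m (i + 1)) (zigzag m i) := by
  obtain ⟨-, hh, hha⟩ := ha
  have hX : (1 : ℝ) ≤ 3 ^ i := one_le_pow₀ (by norm_num)
  have hsag : 3 ^ i * sag m i ≤ 1 / 300 / 100 := by
    have hXM := three_hundred_mul_pow_le_tipX (show i < m by omega)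
    nlinarith [tipX_mul_sag_le (show i < m by omega), sag_pos (m := m) (i := i)]
  have hsag' := sag_le (show i < m by omega)
  rw [turns_iff, height_zigzag_of_mod_eq hi, height_zigzag_of_mod_ne (by omega), sag_succ]
  simp only [zigzag, pow_succ]
  nlinarith [sag_pos (m := m) (i := i)]

lemma Viewer.turns_tip (ha : Viewer c a) (hi : i < m) : Turns c a (zigzag m i) (tip m) := by
  obtain ⟨hs, hs', hh, hh'⟩ := ha
  have hX : (1 : ℝ) ≤ 3 ^ i := one_le_pow₀ (by norm_num)
  have hXM := three_hundred_mul_pow_le_tipX hi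
  have hi1 := height_zigzag_lt_one (c := c) hi
  have htip := (abs_le.1 (abs_height_tip c m).le).1
  rw [turns_iff]
  calc ((3 : ℝ) ^ i - a.1) * (height c a - height c (tip m))
      ≤ (3 ^ i - a.1) * (3 + 5 / 2) := by gcongr <;> linarith
    _ < (tipX m - a.1) * (3 / 2 - 1) := by nlinarith
    _ ≤ (tipX m - a.1) * (height c a - height c (zigzag m i)) := by gcongr; linarith

lemma turns_zigzag_zigzag_zigzag (hij : i < j) (hjk : j < k) (hk : k < m) :
    Turns j (zigzag m j) (zigzag m i) (zigzag m k) := by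
  have hXY := three_mul_pow_le_pow hij
  have hYZ := three_mul_pow_le_pow hjk
  have hX : (0 : ℝ) < 3 ^ i := by positivity
  have hi1 := height_zigzag_le (c := j) (show i < m by omega)
  have hk1 := height_zigzag_le (c := j) hk
  have hbend :
      0 < (3 ^ k - 3 ^ j) * (sag m i - sag m j) + (3 ^ j - 3 ^ i) * (sag m k - sag m j) := by
    have hfactor : (3 ^ k - 3 ^ j) * (sag m i - sag m j) + (3 ^ j - 3 ^ i) * (sag m k - sag m j) =
        (3 ^ j - 3 ^ i) * (3 ^ k - 3 ^ j) * (3 ^ k - 3 ^ i) / tipX m ^ 3 := by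
      simp only [sag]
      ring
    rw [hfactor]
    refine div_pos (mul_pos (mul_pos ?_ ?_) ?_) (pow_pos tipX_pos 3) <;> linarith
  rw [turns_iff, height_zigzag_of_mod_eq rfl]
  simp only [zigzag] at *
  nlinarith

lemma turns_zigzag_tip_of_mod_ne (hi : i < m) (hk : k < m) (hik : i % 2 ≠ k % 2) :
    Turns k (zigzag m i) (tip m) (zigzag m k) := by
  have hXM := three_hundred_mul_pow_le_tipX hi
  have hZM := three_hundred_mul_pow_le_tipX hk
  have hX : (0 : ℝ) < 3 ^ i := by positivity
  have hZ : (0 : ℝ) < 3 ^ k := by positivity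
  have htip := abs_le.1 (abs_height_tip k m).le
  have hi1 := sag_le hi
  have hk1 := sag_le hk
  rw [turns_iff, height_zigzag_of_mod_eq rfl, height_zigzag_of_mod_ne hik]
  simp only [zigzag, tip] at *
  nlinarith

lemma turns_zigzag_tip_of_mod_eq (hik : i < k) (hk : k < m) (hmod : i % 2 = k % 2) :
    Turns 0 (zigzag m i) (zigzag m k) (tip m) := by
  have hX : (1 : ℝ) ≤ 3 ^ i := one_le_pow₀ (by norm_num)
  have hZ := three_mul_pow_le_pow hik
  have hXM := three_hundred_mul_pow_le_tipX (hik.trans hk)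
  have hsi := tipX_mul_sag_le (hik.trans hk)
  have hsk := tipX_mul_sag_le hk
  have hi0 := sag_pos (m := m) (i := i)
  have hk0 := sag_pos (m := m) (i := k)
  have hi1 := height_zigzag_le (c := 0) (hik.trans hk)
  have htip : height 0 (tip m) = 5 / 2 := by simp [height, tip]
  have hlevel : -(sag m i + sag m k) ≤ height 0 (zigzag m i) - height 0 (zigzag m k) := by
    rcases Nat.mod_two_eq_zero_or_one k with h | h
    · rw [height_zigzag_of_mod_eq (hmod.trans h), height_zigzag_of_mod_eq h]
      linarith
    · rw [height_zigzag_of_mod_ne (by omega), height_zigzag_of_mod_ne (by omega)]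
      linarith
  rw [turns_iff, htip]
  calc ((3 : ℝ) ^ k - 3 ^ i) * (height 0 (zigzag m i) - 5 / 2)
      < (tipX m - 3 ^ i) * -(sag m i + sag m k) := by nlinarith
    _ ≤ (tipX m - 3 ^ i) * (height 0 (zigzag m i) - height 0 (zigzag m k)) := by
      gcongr
      linarith

end Visibility

/-- The inner viewer of the upper side. -/
def innerUpper : Pt := (-1 / 2, 2)

/-- The outer viewer of the upper side. -/
def outerUpper : Pt := (1 / 2, 2)

/-- The inner viewer of the lower side, inside the triangle of the other viewers. -/
def innerLower : Pt := (0, -3 / 2)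

/-- The outer viewer of the lower side. -/
def outerLower : Pt := (0, -3)

/-- The part `A` of the construction, two viewers on each side of the horizontal axis. -/
def viewers : Finset Pt := {innerUpper, outerUpper, innerLower, outerLower}

section Viewers

variable {a b p : Pt}

lemma innerViewer_innerUpper : InnerViewer 0 innerUpper := by
  refine ⟨⟨?_, ?_, ?_, ?_⟩, ?_, ?_⟩ <;> norm_num [height, innerUpper]

lemma outerViewer_outerUpper : OuterViewer 0 outerUpper := by
  refine ⟨⟨?_, ?_, ?_, ?_⟩, ?_, ?_⟩ <;> norm_num [height, outerUpper]

lemma innerViewer_innerLower : InnerViewer 1 innerLower := by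
  refine ⟨⟨?_, ?_, ?_, ?_⟩, ?_, ?_⟩ <;> norm_num [height, innerLower]

lemma outerViewer_outerLower : OuterViewer 1 outerLower := by
  refine ⟨⟨?_, ?_, ?_, ?_⟩, ?_, ?_⟩ <;> norm_num [height, outerLower]

lemma exists_outerViewer_or_innerViewer (ha : a ∈ viewers) :
    ∃ c, OuterViewer c a ∨ InnerViewer c a := by
  simp only [viewers, Finset.mem_insert, Finset.mem_singleton] at ha
  rcases ha with rfl | rfl | rfl | rfl
  exacts [⟨0, .inr innerViewer_innerUpper⟩, ⟨0, .inl outerViewer_outerUpper⟩,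
    ⟨1, .inr innerViewer_innerLower⟩, ⟨1, .inl outerViewer_outerLower⟩]

lemma card_viewers : viewers.card = 4 := by
  norm_num [viewers, innerUpper, outerUpper, innerLower, outerLower, Finset.card_insert_of_notMem]

lemma genPos_viewers : GenPos (viewers : Set Pt) := by
  intro p hp q hq r hr hpq hpr hqr
  suffices h : orient p q r ≠ 0 from not_collinear_of_orient_ne_zero h
  simp only [viewers, Finset.coe_insert, Finset.coe_singleton, Set.mem_insert_iff,
    Set.mem_singleton_iff] at hp hq hr
  rcases hp with rfl | rfl | rfl | rfl <;> rcases hq with rfl | rfl | rfl | rfl <;>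
  rcases hr with rfl | rfl | rfl | rfl
  all_goals first
    | contradiction
    | norm_num [orient, cross2, innerUpper, outerUpper, innerLower, outerLower]

lemma turns_viewer_viewer (ha : Viewer 0 a) (hb : Viewer 1 b) (hx : 1 ≤ p.1) (hy : -1 ≤ p.2)
    (hy' : p.2 ≤ 5 / 2) : Turns 0 a b p := by
  obtain ⟨-, has', hah, -⟩ := ha
  obtain ⟨hbs, hbs', hbh, -⟩ := hb
  simp only [turns_iff, height, pow_zero, pow_one, one_mul] at *
  nlinarith

lemma not_collinear_viewer_viewer (ha : a ∈ viewers) (hb : b ∈ viewers) (hab : a ≠ b)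
    (hx : 1 ≤ p.1) (hy : -1 ≤ p.2) (hy' : p.2 ≤ 5 / 2) (hy2 : p.2 ≠ 2) :
    ¬ Collinear ℝ {a, b, p} := by
  suffices h : orient a b p ≠ 0 from not_collinear_of_orient_ne_zero h
  intro h
  simp only [viewers, Finset.mem_insert, Finset.mem_singleton] at ha hb
  rcases ha with rfl | rfl | rfl | rfl <;> rcases hb with rfl | rfl | rfl | rfl
  all_goals first
    | contradiction
    | simp only [orient, cross2, innerUpper, outerUpper, innerLower, outerLower, Prod.fst_sub,
        Prod.snd_sub] at h
      first
        | linarith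
        | exact hy2 (by linarith)

lemma innerLower_inTriangle (hx : 0 < p.1) (hy : -1 ≤ p.2) :
    InTriangle innerLower innerUpper outerLower p := by
  refine ⟨0, ?_, ?_, ?_⟩
  · norm_num [turns_iff, height, innerLower, innerUpper, outerLower]
  · norm_num [turns_iff, height, innerLower, outerLower]
    linarith
  · norm_num [turns_iff, height, innerLower, innerUpper]
    linarith

lemma outerUpper_inTriangle {i m : ℕ} (hi : i < m) :
    InTriangle outerUpper innerUpper (zigzag m i) (tip m) := by
  refine ⟨0, ?_, (outerViewer_outerUpper.turns_tip hi).rotate, ?_⟩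
  · have hy := height_zigzag_lt_one (c := 0) hi
    norm_num [turns_iff, height, innerUpper, outerUpper] at hy ⊢
    linarith
  · norm_num [Turns, orient, cross2, tip, innerUpper, outerUpper]
    linarith

end Viewers

section Carrot

variable {i k m : ℕ} {p : Pt}

lemma zigzag_mem_carrot (hi : i < m) : zigzag m i ∈ carrot m :=
  Finset.mem_insert_of_mem (Finset.mem_image_of_mem _ (Finset.mem_range.2 hi))

lemma tip_mem_carrot : tip m ∈ carrot m :=
  Finset.mem_insert_self _ _

lemma mem_carrot : p ∈ carrot m ↔ p = tip m ∨ ∃ i < m, zigzag m i = p := by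
  simp [carrot]

lemma bounds_of_mem_carrot (hp : p ∈ carrot m) :
    1 ≤ p.1 ∧ -1 ≤ p.2 ∧ p.2 ≤ 5 / 2 ∧ p.2 ≠ 2 := by
  rcases mem_carrot.1 hp with rfl | ⟨i, hi, rfl⟩
  · refine ⟨?_, by norm_num [tip], by norm_num [tip], by norm_num [tip]⟩
    have hpow : (1 : ℝ) ≤ 3 ^ m := one_le_pow₀ (by norm_num)
    simp only [tip, tipX]
    linarith
  · have hlow := neg_one_lt_height_zigzag (c := 0) hi
    have hupp := height_zigzag_lt_one (c := 0) hi
    rw [height, pow_zero, one_mul] at hlow hupp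
    exact ⟨one_le_pow₀ (by norm_num), by linarith, by linarith, by linarith⟩

lemma zigzag_injective (m : ℕ) : Function.Injective (zigzag m) := fun _ _ h ↦
  pow_right_injective₀ (by norm_num : (0 : ℝ) < 3) (by norm_num) (congrArg Prod.fst h)

lemma tip_notMem_image_zigzag (m : ℕ) : tip m ∉ (Finset.range m).image (zigzag m) := by
  simp only [Finset.mem_image, Finset.mem_range, not_exists, not_and]
  intro i hi h
  have hfst : (3 : ℝ) ^ i = tipX m := congrArg Prod.fst h
  have hX : (0 : ℝ) < 3 ^ i := by positivity
  linarith [three_hundred_mul_pow_le_tipX hi]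

lemma card_carrot (m : ℕ) : (carrot m).card = m + 1 := by
  rw [carrot, Finset.card_insert_of_notMem (tip_notMem_image_zigzag m),
    Finset.card_image_of_injective _ (zigzag_injective m), Finset.card_range]

lemma not_collinear_tip_zigzag_zigzag (hik : i < k) (hk : k < m) :
    ¬ Collinear ℝ {tip m, zigzag m i, zigzag m k} := by
  by_cases hmod : i % 2 = k % 2
  · exact (turns_zigzag_tip_of_mod_eq hik hk hmod).rotate.rotate.not_collinear
  · exact (turns_zigzag_tip_of_mod_ne (hik.trans hk) hk hmod).swap.not_collinear

end Carrot

section GeneralPosition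

variable {a x : Pt} {i j k m : ℕ}

lemma not_collinear_viewer_zigzag_zigzag (ha : a ∈ viewers) (hij : i < j) (hj : j < m) :
    ¬ Collinear ℝ {a, zigzag m i, zigzag m j} := by
  obtain ⟨c, houter | hinner⟩ := exists_outerViewer_or_innerViewer ha
  · exact (houter.turns_of_lt hij hj).not_collinear
  by_cases hi : i % 2 = c % 2
  · obtain rfl | hij := Nat.succ_le_iff.2 hij |>.eq_or_lt
    · exact (hinner.turns_succ hi hj).swap.rotate.not_collinear
    · exact (hinner.turns_of_add_two_le hij hj).not_collinear
  · exact (hinner.turns_of_mod_ne hi hij hj).not_collinear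

lemma not_collinear_viewer_zigzag_tip (ha : a ∈ viewers) (hi : i < m) :
    ¬ Collinear ℝ {a, zigzag m i, tip m} := by
  obtain ⟨c, houter | hinner⟩ := exists_outerViewer_or_innerViewer ha
  · exact (houter.turns_tip hi).not_collinear
  · exact (hinner.turns_tip hi).not_collinear

lemma not_collinear_of_mem_image_zigzag
    (h : ∀ i k, i < k → k < m → ¬ Collinear ℝ {x, zigzag m i, zigzag m k}) :
    ∀ q ∈ (Finset.range m).image (zigzag m), ∀ r ∈ (Finset.range m).image (zigzag m), q ≠ r →
      ¬ Collinear ℝ {x, q, r} := by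
  simp only [Finset.mem_image, Finset.mem_range]
  rintro _ ⟨i, hi, rfl⟩ _ ⟨k, hk, rfl⟩ hne
  rcases lt_or_gt_of_ne (ne_of_apply_ne _ hne) with hik | hki
  · exact h i k hik hk
  · rw [Set.pair_comm]
    exact h k i hki hi

lemma genPos_carrot (m : ℕ) : GenPos (carrot m : Set Pt) := by
  rw [carrot, Finset.coe_insert]
  refine GenPos.insert ?_ (not_collinear_of_mem_image_zigzag fun i k ↦
    not_collinear_tip_zigzag_zigzag)
  rw [Finset.coe_image]
  refine genPos_image fun i _ j _ k hk hij hjk ↦ ?_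
  rw [Set.insert_comm]
  exact (turns_zigzag_zigzag_zigzag hij hjk (Finset.mem_range.1 hk)).not_collinear

lemma not_collinear_viewer_carrot_carrot (ha : a ∈ viewers) :
    ∀ q ∈ carrot m, ∀ r ∈ carrot m, q ≠ r → ¬ Collinear ℝ {a, q, r} := by
  intro q hq r hr hne
  rcases Finset.mem_insert.1 hq with rfl | hq <;> rcases Finset.mem_insert.1 hr with rfl | hr
  · exact absurd rfl hne
  · obtain ⟨i, hi, rfl⟩ := Finset.mem_image.1 hr
    rw [Set.pair_comm]
    exact not_collinear_viewer_zigzag_tip ha (Finset.mem_range.1 hi)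
  · obtain ⟨i, hi, rfl⟩ := Finset.mem_image.1 hq
    exact not_collinear_viewer_zigzag_tip ha (Finset.mem_range.1 hi)
  · exact not_collinear_of_mem_image_zigzag (fun i k ↦ not_collinear_viewer_zigzag_zigzag ha)
      q hq r hr hne

lemma genPos_viewers_union_carrot (m : ℕ) : GenPos (↑(viewers ∪ carrot m) : Set Pt) := by
  rw [Finset.coe_union]
  refine genPos_viewers.union (genPos_carrot m) (fun a ha b hb p hp hab ↦ ?_) fun a ha ↦
    not_collinear_viewer_carrot_carrot ha
  obtain ⟨hx, hy, hy', hy2⟩ := bounds_of_mem_carrot hp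
  exact not_collinear_viewer_viewer ha hb hab hx hy hy' hy2

end GeneralPosition

section Critical

variable {a b p q : Pt} {i m : ℕ}

-- The functional maximized at `zigzag m i` is the normal of the tangent there to the parabola
-- carrying its row.
lemma convexPos_image_zigzag (m : ℕ) :
    ConvexPos (↑((Finset.range m).image (zigzag m)) : Set Pt) := by
  refine .of_dotp_lt ?_
  simp only [Finset.mem_coe, Finset.forall_mem_image, Finset.mem_range]
  refine fun i hi ↦ ⟨(2 * 3 ^ i / tipX m ^ 3, (-1) ^ i), fun j hj hne ↦ ?_⟩
  have hij : (3 : ℝ) ^ j - 3 ^ i ≠ 0 := fun h ↦ hne (by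
    rw [pow_right_injective₀ (by norm_num : (0 : ℝ) < 3) (by norm_num) (sub_eq_zero.1 h)])
  have hgap : 0 < (3 ^ j - 3 ^ i) ^ 2 / tipX m ^ 3 :=
    div_pos (sq_pos_of_ne_zero hij) (pow_pos tipX_pos 3)
  calc 2 * 3 ^ i / tipX m ^ 3 * 3 ^ j + height i (zigzag m j)
      ≤ 2 * 3 ^ i / tipX m ^ 3 * 3 ^ j + (1 - sag m j) := by gcongr; exact height_zigzag_le hj
    _ = 2 * 3 ^ i / tipX m ^ 3 * 3 ^ i + (1 - sag m i) - (3 ^ j - 3 ^ i) ^ 2 / tipX m ^ 3 := by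
      simp only [sag]
      ring
    _ < 2 * 3 ^ i / tipX m ^ 3 * 3 ^ i + (1 - sag m i) := sub_lt_self _ hgap
    _ = 2 * 3 ^ i / tipX m ^ 3 * 3 ^ i + height i (zigzag m i) := by
      rw [height_zigzag_of_mod_eq rfl]

lemma not_convexPos_viewers : ¬ ConvexPos (viewers : Set Pt) := by
  refine (innerLower_inTriangle (p := outerUpper) ?_ ?_).not_convexPos ?_ ?_ ?_ ?_
  · norm_num [outerUpper]
  · norm_num [outerUpper]
  all_goals simp [viewers]

lemma not_convexPos_carrot (hm : 3 ≤ m) : ¬ ConvexPos (carrot m : Set Pt) := by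
  have h012 : Turns 0 (zigzag m 0) (zigzag m 1) (zigzag m 2) :=
    (turns_zigzag_zigzag_zigzag (by omega) (by omega) (by omega)).swap.congr rfl
  have h12t : Turns 0 (zigzag m 1) (tip m) (zigzag m 2) :=
    (turns_zigzag_tip_of_mod_ne (by omega) (by omega) (by omega)).congr rfl
  have h02t : Turns 0 (zigzag m 0) (zigzag m 2) (tip m) :=
    turns_zigzag_tip_of_mod_eq (by omega) (by omega) rfl
  have hmem : InTriangle (zigzag m 2) (zigzag m 0) (zigzag m 1) (tip m) :=
    ⟨0, h012, h12t, h02t.rotate.rotate⟩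
  exact hmem.not_convexPos (zigzag_mem_carrot (by omega)) (zigzag_mem_carrot (by omega))
    (zigzag_mem_carrot (by omega)) tip_mem_carrot

lemma inTriangle_viewer_viewer (ha : Viewer 0 a) (hb : Viewer 1 b) (hp : p ∈ carrot m)
    (hap : Turns 0 a p q) (hbp : Turns 1 b p q) : InTriangle p a b q := by
  obtain ⟨hx, hy, hy', -⟩ := bounds_of_mem_carrot hp
  exact inTriangle_of_turns (turns_viewer_viewer ha hb hx hy hy') hap (hbp.swap.rotate.congr rfl)

lemma inTriangle_viewer_viewer_tip (ha : Viewer 0 a) (hb : Viewer 1 b) (hi : i < m) :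
    InTriangle (zigzag m i) a b (tip m) :=
  inTriangle_viewer_viewer ha hb (zigzag_mem_carrot hi) (ha.turns_tip hi) (hb.turns_tip hi)

lemma lCritical_viewers_carrot (hm : 3 ≤ m) : LCritical viewers (carrot m) := by
  refine ⟨not_convexPos_viewers, not_convexPos_carrot hm, fun x hx hextremal ↦ ?_⟩
  rcases Finset.mem_union.1 hx with hx | hx
  · left
    refine GenPos.convexPos_of_card_eq_three ?_ ?_
    · exact genPos_viewers.mono (by simp)
    · rw [Finset.card_erase_of_mem hx, card_viewers]
  rcases mem_carrot.1 hx with rfl | ⟨i, hi, rfl⟩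
  · right
    rw [carrot, Finset.erase_insert (tip_notMem_image_zigzag m)]
    exact convexPos_image_zigzag m
  · refine absurd hextremal ((inTriangle_viewer_viewer_tip outerViewer_outerUpper.toViewer
      outerViewer_outerLower.toViewer hi).not_onHullBoundary ?_ ?_ ?_)
    · simp [viewers]
    · simp [viewers]
    · exact Finset.mem_union_right _ tip_mem_carrot

end Critical

section Blocking

variable {c i j k m : ℕ} {a : Pt}

lemma Viewer.turns_of_mod_eq (ha : Viewer c a) (hj : j % 2 = c % 2) (hij : i < j) (hjm : j < m) :
    Turns c a (zigzag m i) (zigzag m j) := by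
  by_cases hi : i % 2 = c % 2
  · exact ha.turns_of_add_two_le (by omega) hjm
  · exact ha.turns_of_mod_ne hi hij hjm

lemma Viewer.zigzag_inTriangle (ha : Viewer c a) (hj : j % 2 = c % 2) (hij : i < j) (hjk : j < k)
    (hk : k < m) (hsees : Turns c a (zigzag m j) (zigzag m k)) :
    InTriangle (zigzag m j) a (zigzag m i) (zigzag m k) :=
  inTriangle_of_turns (ha.turns_of_mod_eq hj hij (hjk.trans hk)) hsees
    ((turns_zigzag_zigzag_zigzag hij hjk hk).rotate.congr hj)

lemma InnerViewer.zigzag_inTriangle_succ (ha : InnerViewer c a) (hj : j % 2 = c % 2)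
    (hjk : j + 1 < k) (hk : k < m) : InTriangle (zigzag m j) a (zigzag m (j + 1)) (zigzag m k) :=
  inTriangle_of_turns (ha.turns_succ hj (hjk.trans hk)) (ha.turns_of_add_two_le hjk hk)
    ((turns_zigzag_zigzag_zigzag j.lt_succ_self hjk hk).swap.rotate.congr (by omega))

lemma Viewer.zigzag_inTriangle_tip (ha : Viewer c a) (hi : i % 2 ≠ c % 2) (hj : j % 2 = c % 2)
    (him : i < m) (hjm : j < m) (hsees : Turns c a (zigzag m i) (zigzag m j)) :
    InTriangle (zigzag m j) a (zigzag m i) (tip m) :=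
  inTriangle_of_turns hsees (ha.turns_tip hjm)
    ((turns_zigzag_tip_of_mod_ne him hjm (hj ▸ hi)).congr hj)

lemma outerLower_zigzag_inTriangle_tip (hj : j % 2 = 1) (hij : i < j) (hjm : j < m) :
    InTriangle (zigzag m j) outerLower (zigzag m i) (tip m) := by
  have hsees := outerViewer_outerLower.turns_of_lt hij hjm
  by_cases hi : i % 2 = 1
  · exact inTriangle_of_turns hsees (outerViewer_outerLower.turns_tip hjm)
      (turns_zigzag_tip_of_mod_eq hij hjm (hi.trans hj.symm)).swap.rotate
  · exact outerViewer_outerLower.zigzag_inTriangle_tip hi hj (hij.trans hjm) hjm hsees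

end Blocking

lemma card_le_of_orderEmbedding {α : Type*} [LinearOrder α] {s : Finset α} {k : ℕ}
    (h : ∀ f : Fin (k + 1) ↪o α, ¬ ∀ x, f x ∈ s) : s.card ≤ k := by
  by_contra! hk
  exact h (s.orderEmbOfCardLe hk) (s.orderEmbOfCardLe_mem hk)

/-- The indices of the zigzag points of the carrot that belong to `H`. -/
def zigzagIndices (m : ℕ) (H : Finset Pt) : Finset ℕ := {i ∈ Finset.range m | zigzag m i ∈ H}

lemma mem_zigzagIndices {i m : ℕ} {H : Finset Pt} :
    i ∈ zigzagIndices m H ↔ i < m ∧ zigzag m i ∈ H := by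
  simp [zigzagIndices]

lemma inter_carrot_subset (m : ℕ) (H : Finset Pt) :
    H ∩ carrot m ⊆ insert (tip m) ((zigzagIndices m H).image (zigzag m)) := by
  intro p hp
  obtain ⟨hpH, hp⟩ := Finset.mem_inter.1 hp
  rcases mem_carrot.1 hp with rfl | ⟨i, hi, rfl⟩
  · exact Finset.mem_insert_self _ _
  · exact Finset.mem_insert_of_mem (Finset.mem_image_of_mem _ (mem_zigzagIndices.2 ⟨hi, hpH⟩))

lemma card_inter_carrot_le (m : ℕ) (H : Finset Pt) :
    (H ∩ carrot m).card ≤ (zigzagIndices m H).card + 1 :=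
  (Finset.card_le_card (inter_carrot_subset m H)).trans <|
    (Finset.card_insert_le _ _).trans (Nat.succ_le_succ Finset.card_image_le)

lemma card_inter_carrot_le_of_tip_notMem {m : ℕ} {H : Finset Pt} (htip : tip m ∉ H) :
    (H ∩ carrot m).card ≤ (zigzagIndices m H).card := by
  have hsub := (Finset.subset_insert_iff_of_notMem fun h ↦ htip (Finset.mem_inter.1 h).1).1
    (inter_carrot_subset m H)
  exact (Finset.card_le_card hsub).trans Finset.card_image_le

section Holes

variable {c i j k m n : ℕ} {a b : Pt} {P H : Finset Pt}

lemma OuterViewer.mod_ne_and_eq_add_two (ha : OuterViewer c a) (hH : IsKHole n P H)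
    (hP : carrot m ⊆ P) (haH : a ∈ H) (hi : i ∈ zigzagIndices m H) (hk : k ∈ zigzagIndices m H)
    (hij : i < j) (hjk : j < k) : j % 2 ≠ c % 2 ∧ k = i + 2 := by
  rw [mem_zigzagIndices] at hi hk
  have hmod : ∀ l, i < l → l < k → l % 2 ≠ c % 2 := fun l hil hlk hl ↦
    hH.not_inTriangle (hP (zigzag_mem_carrot (hlk.trans hk.1))) haH hi.2 hk.2
      (ha.zigzag_inTriangle hl hil hlk hk.1 (ha.turns_of_lt hlk hk.1))
  have hj := hmod j hij hjk
  have hpred := hmod (j - 1)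
  have hsucc := hmod (j + 1)
  omega

lemma InnerViewer.mod_eq_and_eq_succ (ha : InnerViewer c a) (hH : IsKHole n P H)
    (hP : carrot m ⊆ P) (haH : a ∈ H) (hi : i ∈ zigzagIndices m H) (hj : j ∈ zigzagIndices m H)
    (hk : k ∈ zigzagIndices m H) (hij : i < j) (hjk : j < k) : j % 2 = c % 2 ∧ k = j + 1 := by
  rw [mem_zigzagIndices] at hi hj hk
  have hmod : j % 2 = c % 2 := by
    obtain ⟨l, rfl⟩ := Nat.exists_eq_add_one_of_ne_zero (Nat.ne_zero_of_lt hij)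
    by_contra hl
    exact hH.not_inTriangle (hP (zigzag_mem_carrot (by omega))) haH hj.2 hk.2
      (ha.zigzag_inTriangle_succ (by omega) hjk hk.1)
  refine ⟨hmod, ?_⟩
  by_contra hne
  exact hH.not_inTriangle (hP (zigzag_mem_carrot hj.1)) haH hi.2 hk.2
    (ha.zigzag_inTriangle hmod hij hjk hk.1 (ha.turns_of_add_two_le (by omega) hk.1))

lemma OuterViewer.card_inter_carrot_le_three (ha : OuterViewer c a) (hH : IsKHole n P H)
    (hP : carrot m ⊆ P) (haH : a ∈ H) : (H ∩ carrot m).card ≤ 3 := by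
  by_cases htip : tip m ∈ H
  · refine (card_inter_carrot_le m H).trans <| Nat.succ_le_succ <|
      card_le_of_orderEmbedding fun f hf ↦ ?_
    have h01 : f 0 < f 1 := f.strictMono (by decide)
    have h12 : f 1 < f 2 := f.strictMono (by decide)
    obtain ⟨hmod, heq⟩ := ha.mod_ne_and_eq_add_two hH hP haH (hf 0) (hf 2) h01 h12
    have h1 := mem_zigzagIndices.1 (hf 1)
    have h2 := mem_zigzagIndices.1 (hf 2)
    exact hH.not_inTriangle (hP (zigzag_mem_carrot h2.1)) haH h1.2 htip
      (ha.zigzag_inTriangle_tip hmod (by omega) h1.1 h2.1 (ha.turns_of_lt h12 h2.1))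
  · refine (card_inter_carrot_le_of_tip_notMem htip).trans <|
      card_le_of_orderEmbedding fun f hf ↦ ?_
    have h01 : f 0 < f 1 := f.strictMono (by decide)
    have h12 : f 1 < f 2 := f.strictMono (by decide)
    have h23 : f 2 < f 3 := f.strictMono (by decide)
    have h02 := ha.mod_ne_and_eq_add_two hH hP haH (hf 0) (hf 2) h01 h12
    have h03 := ha.mod_ne_and_eq_add_two hH hP haH (hf 0) (hf 3) h01 (h12.trans h23)
    omega

lemma InnerViewer.card_inter_carrot_le_three (ha : InnerViewer c a) (hH : IsKHole n P H)
    (hP : carrot m ⊆ P) (haH : a ∈ H) : (H ∩ carrot m).card ≤ 3 := by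
  by_cases htip : tip m ∈ H
  · refine (card_inter_carrot_le m H).trans <| Nat.succ_le_succ <|
      card_le_of_orderEmbedding fun f hf ↦ ?_
    have h01 : f 0 < f 1 := f.strictMono (by decide)
    have h12 : f 1 < f 2 := f.strictMono (by decide)
    obtain ⟨hmod, heq⟩ := ha.mod_eq_and_eq_succ hH hP haH (hf 0) (hf 1) (hf 2) h01 h12
    have h1 := mem_zigzagIndices.1 (hf 1)
    have h2 := mem_zigzagIndices.1 (hf 2)
    exact hH.not_inTriangle (hP (zigzag_mem_carrot h1.1)) haH h2.2 htip
      (ha.zigzag_inTriangle_tip (by omega) hmod h2.1 h1.1 (heq ▸ ha.turns_succ hmod (heq ▸ h2.1)))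
  · refine (card_inter_carrot_le_of_tip_notMem htip).trans <|
      card_le_of_orderEmbedding fun f hf ↦ ?_
    have h01 : f 0 < f 1 := f.strictMono (by decide)
    have h12 : f 1 < f 2 := f.strictMono (by decide)
    have h23 : f 2 < f 3 := f.strictMono (by decide)
    have h1 := ha.mod_eq_and_eq_succ hH hP haH (hf 0) (hf 1) (hf 2) h01 h12
    have h2 := ha.mod_eq_and_eq_succ hH hP haH (hf 0) (hf 2) (hf 3) (h01.trans h12) h23
    omega

lemma card_inter_carrot_le_two_of_tip_notMem (ha : InnerViewer c a) (hb : OuterViewer c b)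
    (hH : IsKHole n P H) (hP : carrot m ⊆ P) (haH : a ∈ H) (hbH : b ∈ H) (htip : tip m ∉ H) :
    (H ∩ carrot m).card ≤ 2 := by
  refine (card_inter_carrot_le_of_tip_notMem htip).trans <|
    card_le_of_orderEmbedding fun f hf ↦ ?_
  have h01 : f 0 < f 1 := f.strictMono (by decide)
  have h12 : f 1 < f 2 := f.strictMono (by decide)
  exact (hb.mod_ne_and_eq_add_two hH hP hbH (hf 0) (hf 2) h01 h12).1
    (ha.mod_eq_and_eq_succ hH hP haH (hf 0) (hf 1) (hf 2) h01 h12).1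

lemma card_inter_carrot_le_two_of_upper (hH : IsKHole n (viewers ∪ carrot m) H)
    (hinner : innerUpper ∈ H) (houter : outerUpper ∈ H) : (H ∩ carrot m).card ≤ 2 := by
  have hP := Finset.subset_union_right (s₁ := viewers) (s₂ := carrot m)
  by_cases htip : tip m ∈ H
  · refine (card_inter_carrot_le m H).trans <| Nat.succ_le_succ <|
      card_le_of_orderEmbedding fun f hf ↦ ?_
    have h0 := mem_zigzagIndices.1 (hf 0)
    exact hH.not_inTriangle (hH.1 houter) hinner h0.2 htip (outerUpper_inTriangle h0.1)
  · exact card_inter_carrot_le_two_of_tip_notMem innerViewer_innerUpper outerViewer_outerUpper hH hP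
      hinner houter htip

lemma card_inter_carrot_le_two_of_lower (hH : IsKHole n P H) (hP : carrot m ⊆ P)
    (hinner : innerLower ∈ H) (houter : outerLower ∈ H) : (H ∩ carrot m).card ≤ 2 := by
  by_cases htip : tip m ∈ H
  · refine (card_inter_carrot_le m H).trans <| Nat.succ_le_succ <|
      card_le_of_orderEmbedding fun f hf ↦ ?_
    have h01 : f 0 < f 1 := f.strictMono (by decide)
    have h0 := mem_zigzagIndices.1 (hf 0)
    have h1 := mem_zigzagIndices.1 (hf 1)
    by_cases hmod : f 1 % 2 = 1
    · exact hH.not_inTriangle (hP (zigzag_mem_carrot h1.1)) houter h0.2 htip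
        (outerLower_zigzag_inTriangle_tip hmod h01 h1.1)
    · obtain ⟨l, hl⟩ := Nat.exists_eq_add_one_of_ne_zero (Nat.ne_zero_of_lt h01)
      rw [hl] at hmod h1
      exact hH.not_inTriangle (hP (zigzag_mem_carrot (by omega))) hinner h1.2 htip
        (innerViewer_innerLower.zigzag_inTriangle_tip (j := l) hmod (by omega) h1.1 (by omega)
          (innerViewer_innerLower.turns_succ (by omega) h1.1))
  · exact card_inter_carrot_le_two_of_tip_notMem innerViewer_innerLower outerViewer_outerLower hH hP
      hinner houter htip

end Holes

section NoDividedHole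

variable {c k m n : ℕ} {a b p : Pt} {H : Finset Pt}

lemma card_le_card_inter_viewers_add (hH : IsKHole n (viewers ∪ carrot m) H) :
    n ≤ (H ∩ viewers).card + (H ∩ carrot m).card := by
  rw [← hH.2.1]
  nth_rw 1 [← Finset.inter_eq_left.2 hH.1, Finset.inter_union_distrib_left]
  exact Finset.card_union_le _ _

lemma card_le_four_of_inter_viewers_subset (ha : InnerViewer c a) (hb : OuterViewer c b)
    (hH : IsKHole n (viewers ∪ carrot m) H) (hsub : H ∩ viewers ⊆ {a, b})
    (hne : (H ∩ viewers).Nonempty) (hboth : a ∈ H → b ∈ H → (H ∩ carrot m).card ≤ 2) :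
    n ≤ 4 := by
  have hP := Finset.subset_union_right (s₁ := viewers) (s₂ := carrot m)
  have hcard := card_le_card_inter_viewers_add hH
  have hsub_b : a ∉ H → H ∩ viewers ⊆ {b} := fun haH ↦
    (Finset.subset_insert_iff_of_notMem fun h ↦ haH (Finset.mem_inter.1 h).1).1 hsub
  have hsub_a : b ∉ H → H ∩ viewers ⊆ {a} := fun hbH ↦
    (Finset.subset_insert_iff_of_notMem fun h ↦ hbH (Finset.mem_inter.1 h).1).1
      (Finset.pair_comm a b ▸ hsub)
  by_cases haH : a ∈ H <;> by_cases hbH : b ∈ H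
  · have hviewers := (Finset.card_le_card hsub).trans Finset.card_le_two
    have hcarrot := hboth haH hbH
    omega
  · have hviewers := Finset.card_le_card (hsub_a hbH)
    have hcarrot := ha.card_inter_carrot_le_three hH hP haH
    rw [Finset.card_singleton] at hviewers
    omega
  · have hviewers := Finset.card_le_card (hsub_b haH)
    have hcarrot := hb.card_inter_carrot_le_three hH hP hbH
    rw [Finset.card_singleton] at hviewers
    omega
  · obtain ⟨q, hq⟩ := hne
    exact absurd (Finset.mem_singleton.1 (hsub_b haH hq) ▸ (Finset.mem_inter.1 hq).1) hbH

lemma IsKHole.notMem_of_innerUpper_of_outerLower (hH : IsKHole n (viewers ∪ carrot m) H)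
    (hinner : innerUpper ∈ H) (houter : outerLower ∈ H) (hx : 0 < p.1) (hy : -1 ≤ p.2) : p ∉ H :=
  fun hp ↦ hH.not_inTriangle (Finset.mem_union_left _ (by simp [viewers])) hinner houter hp
    (innerLower_inTriangle hx hy)

lemma card_inter_carrot_le_of_turns {P : Finset Pt} (ha : Viewer 0 a) (hb : Viewer 1 b)
    (hH : IsKHole n P H) (hP : carrot m ⊆ P) (haH : a ∈ H) (hbH : b ∈ H) (hm : 0 < m)
    (hsee : ∀ j < m, k ≤ j →
      Turns 0 a (zigzag m 0) (zigzag m j) ∧ Turns 1 b (zigzag m 0) (zigzag m j)) :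
    (H ∩ carrot m).card ≤ k := by
  have hzero : zigzag m 0 ∈ P := hP (zigzag_mem_carrot hm)
  have htip : tip m ∉ H := fun htip ↦
    hH.not_inTriangle hzero haH hbH htip (inTriangle_viewer_viewer_tip ha hb hm)
  have hindices : zigzagIndices m H ⊆ Finset.range k := by
    intro j hj
    obtain ⟨hjm, hjH⟩ := mem_zigzagIndices.1 hj
    by_contra hkj
    obtain ⟨hsee_a, hsee_b⟩ := hsee j hjm (by simpa using hkj)
    exact hH.not_inTriangle hzero haH hbH hjH
      (inTriangle_viewer_viewer ha hb (zigzag_mem_carrot hm) hsee_a hsee_b)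
  calc (H ∩ carrot m).card ≤ (zigzagIndices m H).card := card_inter_carrot_le_of_tip_notMem htip
    _ ≤ (Finset.range k).card := Finset.card_le_card hindices
    _ = k := Finset.card_range k

lemma card_le_four_of_upper_of_lower (ha : Viewer 0 a) (hb : Viewer 1 b)
    (hH : IsKHole n (viewers ∪ carrot m) H) (haH : a ∈ H) (hbH : b ∈ H) (hm : 0 < m) :
    n ≤ 4 := by
  have hP := Finset.subset_union_right (s₁ := viewers) (s₂ := carrot m)
  have hcard := card_le_card_inter_viewers_add hH
  by_contra! hn
  by_cases houter : outerUpper ∈ H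
  · have hcarrot : (H ∩ carrot m).card ≤ 1 :=
      card_inter_carrot_le_of_turns outerViewer_outerUpper.toViewer hb hH hP houter hbH hm
        fun j hjm hj ↦ ⟨outerViewer_outerUpper.turns_of_lt hj hjm,
          hb.turns_of_mod_ne (by decide) hj hjm⟩
    have hall : viewers ⊆ H := Finset.inter_eq_right.1 <|
      Finset.eq_of_subset_of_card_le Finset.inter_subset_right (by rw [card_viewers]; omega)
    refine hH.notMem_of_innerUpper_of_outerLower (hall ?_) (hall ?_) ?_ ?_ houter
    · simp [viewers]
    · simp [viewers]
    · norm_num [outerUpper]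
    · norm_num [outerUpper]
  · have hcarrot : (H ∩ carrot m).card ≤ 2 :=
      card_inter_carrot_le_of_turns ha hb hH hP haH hbH hm fun j hjm hj ↦
        ⟨ha.turns_of_add_two_le hj hjm, hb.turns_of_add_two_le hj hjm⟩
    have hsub : H ∩ viewers ⊆ {innerUpper, innerLower, outerLower} :=
      (Finset.subset_insert_iff_of_notMem fun h ↦ houter (Finset.mem_inter.1 h).1).1
        (Finset.inter_subset_right.trans_eq (Finset.insert_comm _ _ _))
    have heq := Finset.eq_of_subset_of_card_le hsub (Finset.card_le_three.trans (by omega))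
    have hmem : ∀ q ∈ ({innerUpper, innerLower, outerLower} : Finset Pt), q ∈ H := fun q hq ↦
      (Finset.mem_inter.1 (heq ▸ hq)).1
    have hthree : (H ∩ viewers).card ≤ 3 := (Finset.card_le_card hsub).trans Finset.card_le_three
    obtain ⟨p, hp⟩ : (H ∩ carrot m).Nonempty := Finset.card_pos.1 (by omega)
    obtain ⟨hpH, hpC⟩ := Finset.mem_inter.1 hp
    obtain ⟨hx, hy, -⟩ := bounds_of_mem_carrot hpC
    exact hH.notMem_of_innerUpper_of_outerLower (hmem _ (by simp)) (hmem _ (by simp))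
      (zero_lt_one.trans_le hx) hy hpH

lemma viewer_zero_or_viewer_one (ha : a ∈ viewers) :
    (a ∈ ({innerUpper, outerUpper} : Finset Pt) ∧ Viewer 0 a) ∨
      (a ∈ ({innerLower, outerLower} : Finset Pt) ∧ Viewer 1 a) := by
  simp only [viewers, Finset.mem_insert, Finset.mem_singleton] at ha
  rcases ha with rfl | rfl | rfl | rfl
  · exact .inl ⟨by simp, innerViewer_innerUpper.toViewer⟩
  · exact .inl ⟨by simp, outerViewer_outerUpper.toViewer⟩
  · exact .inr ⟨by simp, innerViewer_innerLower.toViewer⟩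
  · exact .inr ⟨by simp, outerViewer_outerLower.toViewer⟩

lemma card_le_four_of_inter_viewers_nonempty (hm : 0 < m)
    (hH : IsKHole n (viewers ∪ carrot m) H) (hne : (H ∩ viewers).Nonempty) : n ≤ 4 := by
  by_cases hupper : H ∩ viewers ⊆ {innerUpper, outerUpper}
  · exact card_le_four_of_inter_viewers_subset innerViewer_innerUpper outerViewer_outerUpper hH
      hupper hne (card_inter_carrot_le_two_of_upper hH)
  by_cases hlower : H ∩ viewers ⊆ {innerLower, outerLower}
  · exact card_le_four_of_inter_viewers_subset innerViewer_innerLower outerViewer_outerLower hH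
      hlower hne (card_inter_carrot_le_two_of_lower hH Finset.subset_union_right)
  obtain ⟨b, hbHA, hb⟩ := Finset.not_subset.1 hupper
  obtain ⟨a, haHA, ha⟩ := Finset.not_subset.1 hlower
  obtain ⟨hbH, hbA⟩ := Finset.mem_inter.1 hbHA
  obtain ⟨haH, haA⟩ := Finset.mem_inter.1 haHA
  have hviewer_b := ((viewer_zero_or_viewer_one hbA).resolve_left fun h ↦ hb h.1).2
  have hviewer_a := ((viewer_zero_or_viewer_one haA).resolve_right fun h ↦ ha h.1).2
  exact card_le_four_of_upper_of_lower hviewer_a hviewer_b hH haH hbH hm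

end NoDividedHole

lemma fst_le_of_mem_viewers {a : Pt} (ha : a ∈ viewers) : a.1 ≤ 1 / 2 := by
  simp only [viewers, Finset.mem_insert, Finset.mem_singleton] at ha
  rcases ha with rfl | rfl | rfl | rfl <;>
    norm_num [innerUpper, outerUpper, innerLower, outerLower]

theorem carrot_construction_general (n : ℕ) (hn : 4 ≤ n) :
    ∃ (v : Pt) (c : ℝ) (A B : Finset Pt),
      v ≠ 0 ∧ (∀ p ∈ A, dotp v p < c) ∧ (∀ p ∈ B, c < dotp v p) ∧
      GenPos (↑(A ∪ B) : Set Pt) ∧ A.card = 4 ∧ B.card = n ∧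
      LCritical A B ∧ ¬ ∃ H : Finset Pt, DividedFiveHole A B H := by
  obtain ⟨m, rfl⟩ : ∃ m, n = m + 1 := Nat.exists_eq_add_one_of_ne_zero (by omega)
  have hdotp : ∀ p : Pt, dotp (1, 0) p = p.1 := by simp [dotp]
  refine ⟨(1, 0), 3 / 4, viewers, carrot m, by simp, fun p hp ↦ ?_, fun p hp ↦ ?_,
    genPos_viewers_union_carrot m, card_viewers, card_carrot m,
    lCritical_viewers_carrot (by omega), ?_⟩
  · rw [hdotp]
    linarith [fst_le_of_mem_viewers hp]
  · rw [hdotp]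
    linarith [(bounds_of_mem_carrot hp).1]
  · rintro ⟨H, hH, hviewers, -⟩
    have hfour := card_le_four_of_inter_viewers_nonempty (by omega) hH (by exact_mod_cast hviewers)
    omega

/-- **Proposition 17.** For every integer `n ≥ 5` there exist a line `ℓ` and an
`ℓ`-critical set `C = A ∪ B` in general position with `|A| = 4` and `|B| = n` such
that there is no `ℓ`-divided 5-hole in `C`. -/
theorem carrot_construction (n : ℕ) (hn : 5 ≤ n) :
    ∃ (v : Pt) (c : ℝ) (A B : Finset Pt),
      v ≠ 0 ∧ (∀ p ∈ A, dotp v p < c) ∧ (∀ p ∈ B, c < dotp v p) ∧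
      GenPos (↑(A ∪ B) : Set Pt) ∧ A.card = 4 ∧ B.card = n ∧
      LCritical A B ∧ ¬ ∃ H : Finset Pt, DividedFiveHole A B H :=
  carrot_construction_general n (by omega)

end
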